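/- Fix j₀, m₀ ∈ ℂ. Let W be the ℂ-vector space of finitely supported functions on ℤ×ℤ, with basis vectors v_{j,m} indexed by j = j₀ + k/2 and m = m₀ + k/2 + l for (k,l) ∈ ℤ². With √ the principal complex square root, define ℂ-linear operators on W byature T₋ v_{j,m} = −√(j+m)·v_{j−½,m−½}, T₊ v_{j,m} = √(j−m)·v_{j−½,m+½}, T̃₋ v_{j,m} = √(j−m+1)·v_{j+½,m−½}, T̃₊ v_{j,m} = √(j+m+1)·v_{j+½,m+½}. Then: (i) [T₊,T̃₋] = [T̃₊,T₋] = id, and all other commutators among T₊,T₋,T̃₊,T̃₋ vanish; (ii) setting J₊ := i·T₊T̃₊, J₋ := −i·T₋T̃₋ and J₀ := −½(T₋T̃₊ + T₊T̃₋), one has J₀ v_{j,m} = m·v_{j,m} and J_± v_{j,m} = i·√(j∓m)·√(j±m+1)·v_{j,m±1}; consequently [J₀,J_±] = ±J_± and [J₊,J₋] = −2J₀. Thus the Jordan–Schwinger construction realizes the 𝔰𝔭𝔦𝔫(2,1) generators for arbitrary weight lattices, including those of the continuous series (j₀ ∈ ℂ arbitrary). -/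

import Mathlib

noncomputable section

/-- The principal complex square root, `√z = z^{1/2}` (so `(√z)² = z` for all `z ∈ ℂ`). -/
def csqrt (z : ℂ) : ℂ := z ^ (1 / 2 : ℂ)

/-- The linear operator on finitely supported functions `(ℤ×ℤ) →₀ ℂ` sending the basis
vector at `kl` to `f kl` times the basis vector at `g kl`. -/
def opOf (f : ℤ × ℤ → ℂ) (g : ℤ × ℤ → ℤ × ℤ) :
    ((ℤ × ℤ) →₀ ℂ) →ₗ[ℂ] ((ℤ × ℤ) →₀ ℂ) :=
  Finsupp.lsum ℂ fun kl => f kl • Finsupp.lsingle (g kl)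

/-- `j = j₀ + k/2`. -/
def jf (j₀ : ℂ) (k : ℤ) : ℂ := j₀ + (k : ℂ) / 2

/-- `m = m₀ + k/2 + l`. -/
def mf (m₀ : ℂ) (kl : ℤ × ℤ) : ℂ := m₀ + (kl.1 : ℂ) / 2 + (kl.2 : ℂ)

/-- `T₋ v_{j,m} = -√(j+m) v_{j-½,m-½}`. -/
def Tm (j₀ m₀ : ℂ) : ((ℤ × ℤ) →₀ ℂ) →ₗ[ℂ] ((ℤ × ℤ) →₀ ℂ) :=
  opOf (fun kl => -csqrt (jf j₀ kl.1 + mf m₀ kl)) (fun kl => (kl.1 - 1, kl.2))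

/-- `T₊ v_{j,m} = √(j-m) v_{j-½,m+½}`. -/
def Tp (j₀ m₀ : ℂ) : ((ℤ × ℤ) →₀ ℂ) →ₗ[ℂ] ((ℤ × ℤ) →₀ ℂ) :=
  opOf (fun kl => csqrt (jf j₀ kl.1 - mf m₀ kl)) (fun kl => (kl.1 - 1, kl.2 + 1))

/-- `T̃₋ v_{j,m} = √(j-m+1) v_{j+½,m-½}`. -/
def Ttm (j₀ m₀ : ℂ) : ((ℤ × ℤ) →₀ ℂ) →ₗ[ℂ] ((ℤ × ℤ) →₀ ℂ) :=
  opOf (fun kl => csqrt (jf j₀ kl.1 - mf m₀ kl + 1)) (fun kl => (kl.1 + 1, kl.2 - 1))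

/-- `T̃₊ v_{j,m} = √(j+m+1) v_{j+½,m+½}`. -/
def Ttp (j₀ m₀ : ℂ) : ((ℤ × ℤ) →₀ ℂ) →ₗ[ℂ] ((ℤ × ℤ) →₀ ℂ) :=
  opOf (fun kl => csqrt (jf j₀ kl.1 + mf m₀ kl + 1)) (fun kl => (kl.1 + 1, kl.2))

/-- `J₊ = i T₊T̃₊`. -/
def Jp (j₀ m₀ : ℂ) : ((ℤ × ℤ) →₀ ℂ) →ₗ[ℂ] ((ℤ × ℤ) →₀ ℂ) :=
  Complex.I • (Tp j₀ m₀ ∘ₗ Ttp j₀ m₀)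

/-- `J₋ = -i T₋T̃₋`. -/
def Jm (j₀ m₀ : ℂ) : ((ℤ × ℤ) →₀ ℂ) →ₗ[ℂ] ((ℤ × ℤ) →₀ ℂ) :=
  (-Complex.I) • (Tm j₀ m₀ ∘ₗ Ttm j₀ m₀)

/-- `J₀ = -½(T₋T̃₊ + T₊T̃₋)`. -/
def J0 (j₀ m₀ : ℂ) : ((ℤ × ℤ) →₀ ℂ) →ₗ[ℂ] ((ℤ × ℤ) →₀ ℂ) :=
  (-(1 / 2 : ℂ)) • (Tm j₀ m₀ ∘ₗ Ttp j₀ m₀ + Tp j₀ m₀ ∘ₗ Ttm j₀ m₀)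

/-!
`T₊`, `T̃₋` shift `j - m` by `∓1` and fix `j + m`, while `T₋`, `T̃₊` shift `j + m` by `∓1` and fix
`j - m`. Up to sign, each pair consists of the ladder operators `v_n ↦ √n v_{n-1}` and
`v_n ↦ √(n+1) v_{n+1}`, whose products in the two orders are multiplication by `n + 1` and by `n`,
and operators from different pairs commute. Hence `(T₊, T̃₋)` and `(T̃₊, T₋)` are two commuting
canonical pairs, the sign of `T₋` making `T̃₊` the annihilation operator of its pair. In any ring
the Leibniz rule gives the commutators of the quadratic expressions in two such pairs, in
particular those of `J₀`, `J₊`, `J₋`.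
-/

section TwoModes

variable {R : Type*} [Ring R]

theorem lie_mul (x y z : R) : ⁅x, y * z⁆ = ⁅x, y⁆ * z + y * ⁅x, z⁆ := by
  simp only [Ring.lie_def]
  noncomm_ring

theorem mul_lie (x y z : R) : ⁅x * y, z⁆ = x * ⁅y, z⁆ + ⁅x, z⁆ * y := by
  simp only [Ring.lie_def]
  noncomm_ring

theorem smul_lie_smul {K : Type*} [CommMonoid K] [DistribMulAction K R] [IsScalarTower K R R]
    [SMulCommClass K R R] (r s : K) (x y : R) : ⁅r • x, s • y⁆ = (r * s) • ⁅x, y⁆ := by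
  rw [Ring.lie_def, Ring.lie_def, smul_mul_smul_comm, smul_mul_smul_comm, mul_comm s r, smul_sub]

/-- Two mutually commuting canonical pairs in a ring, the abstract input of the Jordan–Schwinger
construction: `aᵢ` is the annihilation operator and `cᵢ` the creation operator of mode `i`. -/
structure IsTwoModeHeisenberg (a₁ c₁ a₂ c₂ : R) : Prop where
  lie_fst : ⁅a₁, c₁⁆ = 1
  lie_snd : ⁅a₂, c₂⁆ = 1
  commute_annihilation : Commute a₁ a₂
  commute_creation : Commute c₁ c₂
  commute_fst_snd : Commute a₁ c₂
  commute_snd_fst : Commute a₂ c₁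

namespace IsTwoModeHeisenberg

variable {a₁ c₁ a₂ c₂ : R}

theorem lie_annihilation_mul_creation_mul (h : IsTwoModeHeisenberg a₁ c₁ a₂ c₂) :
    ⁅a₁ * a₂, c₂ * c₁⁆ = c₂ * a₂ + a₁ * c₁ := by
  have h₁ : ⁅a₁ * a₂, c₁⁆ = a₂ := by
    rw [mul_lie, h.commute_snd_fst.lie_eq, h.lie_fst, mul_zero, one_mul, zero_add]
  have h₂ : ⁅a₁ * a₂, c₂⁆ = a₁ := by
    rw [mul_lie, h.lie_snd, h.commute_fst_snd.lie_eq, mul_one, zero_mul, add_zero]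
  rw [lie_mul, h₁, h₂, add_comm]

theorem lie_number_annihilation_mul (h : IsTwoModeHeisenberg a₁ c₁ a₂ c₂) :
    ⁅c₂ * a₂ + a₁ * c₁, a₁ * a₂⁆ = -(2 • (a₁ * a₂)) := by
  let _ : LieRing R := LieRing.ofAssociativeRing
  have h₁ : ⁅c₂ * a₂ + a₁ * c₁, a₁⁆ = -a₁ := by
    rw [add_lie, mul_lie, mul_lie, h.commute_annihilation.symm.lie_eq,
      h.commute_fst_snd.symm.lie_eq, lie_self, ← lie_skew, h.lie_fst]
    noncomm_ring
  have h₂ : ⁅c₂ * a₂ + a₁ * c₁, a₂⁆ = -a₂ := by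
    rw [add_lie, mul_lie, mul_lie, h.commute_annihilation.lie_eq,
      h.commute_snd_fst.symm.lie_eq, lie_self, ← lie_skew, h.lie_snd]
    noncomm_ring
  rw [lie_mul, h₁, h₂]
  noncomm_ring

theorem lie_number_creation_mul (h : IsTwoModeHeisenberg a₁ c₁ a₂ c₂) :
    ⁅c₂ * a₂ + a₁ * c₁, c₂ * c₁⁆ = 2 • (c₂ * c₁) := by
  let _ : LieRing R := LieRing.ofAssociativeRing
  have h₁ : ⁅c₂ * a₂ + a₁ * c₁, c₁⁆ = c₁ := by
    rw [add_lie, mul_lie, mul_lie, h.commute_snd_fst.lie_eq, h.commute_creation.symm.lie_eq,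
      lie_self, h.lie_fst]
    noncomm_ring
  have h₂ : ⁅c₂ * a₂ + a₁ * c₁, c₂⁆ = c₂ := by
    rw [add_lie, mul_lie, mul_lie, h.commute_creation.lie_eq, h.commute_fst_snd.lie_eq,
      lie_self, h.lie_snd]
    noncomm_ring
  rw [lie_mul, h₁, h₂, two_nsmul]

variable {K : Type*} [Field K] [NeZero (2 : K)] [Algebra K R]

theorem lie_neg_half_number_smul_annihilation_mul (h : IsTwoModeHeisenberg a₁ c₁ a₂ c₂) (s : K) :
    ⁅(-(1 / 2) : K) • (c₂ * a₂ + a₁ * c₁), s • (a₁ * a₂)⁆ = s • (a₁ * a₂) := by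
  rw [smul_lie_smul, h.lie_number_annihilation_mul]
  match_scalars
  field_simp

theorem lie_neg_half_number_smul_creation_mul (h : IsTwoModeHeisenberg a₁ c₁ a₂ c₂) (s : K) :
    ⁅(-(1 / 2) : K) • (c₂ * a₂ + a₁ * c₁), s • (c₂ * c₁)⁆ = -(s • (c₂ * c₁)) := by
  rw [smul_lie_smul, h.lie_number_creation_mul]
  match_scalars
  field_simp

theorem lie_smul_annihilation_mul_smul_creation_mul (h : IsTwoModeHeisenberg a₁ c₁ a₂ c₂) {s t : K}
    (hst : s * t = 1) :
    ⁅s • (a₁ * a₂), t • (c₂ * c₁)⁆ = (-2 : K) • (-(1 / 2) : K) • (c₂ * a₂ + a₁ * c₁) := by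
  have h_half : (-2 : K) * -(1 / 2) = 1 := by rw [neg_mul_neg, mul_one_div_cancel two_ne_zero]
  rw [smul_lie_smul, h.lie_annihilation_mul_creation_mul, hst, smul_smul, h_half]

end IsTwoModeHeisenberg

end TwoModes

section WeightedShifts

theorem csqrt_mul_self (z : ℂ) : csqrt z * csqrt z = z := by
  rw [csqrt, ← sq, one_div]
  exact Complex.cpow_ofNat_inv_pow z 2

variable (f f' : ℤ × ℤ → ℂ) (g g' : ℤ × ℤ → ℤ × ℤ)

theorem opOf_single_one (x : ℤ × ℤ) :
    opOf f g (Finsupp.single x 1) = f x • Finsupp.single (g x) 1 := by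
  simp [opOf]

theorem opOf_mul_opOf : opOf f g * opOf f' g' = opOf (fun x => f (g' x) * f' x) (g ∘ g') := by
  ext x : 2
  simp only [LinearMap.comp_apply, Finsupp.lsingle_apply, Module.End.mul_apply, opOf_single_one,
    map_smul, smul_smul, mul_comm, Function.comp_apply]

theorem opOf_one_id : opOf (fun _ => 1) id = 1 := by
  ext x : 2
  simp only [LinearMap.comp_apply, Finsupp.lsingle_apply, opOf_single_one, one_smul, id,
    Module.End.one_apply]

theorem opOf_sub_opOf : opOf f g - opOf f' g = opOf (fun x => f x - f' x) g := by
  ext x : 2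
  simp only [LinearMap.comp_apply, Finsupp.lsingle_apply, LinearMap.sub_apply, opOf_single_one,
    sub_smul]

variable {f f' g g'}

theorem opOf_mul_opOf_eq_opOf_id {n : ℤ × ℤ → ℂ} (hg : Function.LeftInverse g g')
    (hn : ∀ x, f (g' x) * f' x = n x) : opOf f g * opOf f' g' = opOf n id := by
  rw [opOf_mul_opOf, hg.comp_eq_id, funext hn]

theorem commute_opOf (hg : Function.Commute g g') (hf : ∀ x, f (g' x) = f x)
    (hf' : ∀ x, f' (g x) = f' x) : Commute (opOf f g) (opOf f' g') := by
  simp only [commute_iff_eq, opOf_mul_opOf, hf, hf', hg.comp_eq, mul_comm]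

end WeightedShifts

section SpinorOperators

variable (j₀ m₀ : ℂ)

theorem jf_add_mf (k l : ℤ) : jf j₀ k + mf m₀ (k, l) = j₀ + m₀ + (k + l : ℤ) := by
  simp only [jf, mf]
  push_cast
  ring

theorem jf_sub_mf (k l : ℤ) : jf j₀ k - mf m₀ (k, l) = j₀ - m₀ - l := by
  simp only [jf, mf]
  ring

theorem Tp_mul_Ttm : Tp j₀ m₀ * Ttm j₀ m₀ = opOf (fun x => jf j₀ x.1 - mf m₀ x + 1) id := by
  refine opOf_mul_opOf_eq_opOf_id (fun x => by simp) fun ⟨k, l⟩ => ?_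
  have h : jf j₀ (k + 1) - mf m₀ (k + 1, l - 1) = jf j₀ k - mf m₀ (k, l) + 1 := by
    rw [jf_sub_mf, jf_sub_mf]
    push_cast
    ring
  rw [h, csqrt_mul_self]

theorem Ttm_mul_Tp : Ttm j₀ m₀ * Tp j₀ m₀ = opOf (fun x => jf j₀ x.1 - mf m₀ x) id := by
  refine opOf_mul_opOf_eq_opOf_id (fun x => by simp) fun ⟨k, l⟩ => ?_
  have h : jf j₀ (k - 1) - mf m₀ (k - 1, l + 1) + 1 = jf j₀ k - mf m₀ (k, l) := by
    rw [jf_sub_mf, jf_sub_mf]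
    push_cast
    ring
  rw [h, csqrt_mul_self]

theorem Tm_mul_Ttp : Tm j₀ m₀ * Ttp j₀ m₀ = opOf (fun x => -(jf j₀ x.1 + mf m₀ x + 1)) id := by
  refine opOf_mul_opOf_eq_opOf_id (fun x => by simp) fun ⟨k, l⟩ => ?_
  have h : jf j₀ (k + 1) + mf m₀ (k + 1, l) = jf j₀ k + mf m₀ (k, l) + 1 := by
    rw [jf_add_mf, jf_add_mf]
    push_cast
    ring
  rw [h, neg_mul, csqrt_mul_self]

theorem Ttp_mul_Tm : Ttp j₀ m₀ * Tm j₀ m₀ = opOf (fun x => -(jf j₀ x.1 + mf m₀ x)) id := by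
  refine opOf_mul_opOf_eq_opOf_id (fun x => by simp) fun ⟨k, l⟩ => ?_
  have h : jf j₀ (k - 1) + mf m₀ (k - 1, l) + 1 = jf j₀ k + mf m₀ (k, l) := by
    rw [jf_add_mf, jf_add_mf]
    push_cast
    ring
  rw [h, mul_neg, csqrt_mul_self]

theorem lie_Tp_Ttm : ⁅Tp j₀ m₀, Ttm j₀ m₀⁆ = 1 := by
  simp only [Ring.lie_def, Tp_mul_Ttm, Ttm_mul_Tp, opOf_sub_opOf, add_sub_cancel_left, opOf_one_id]

theorem lie_Ttp_Tm : ⁅Ttp j₀ m₀, Tm j₀ m₀⁆ = 1 := by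
  simp only [Ring.lie_def, Ttp_mul_Tm, Tm_mul_Ttp, opOf_sub_opOf, neg_sub_neg, add_sub_cancel_left,
    opOf_one_id]

theorem commute_Tp_Tm : Commute (Tp j₀ m₀) (Tm j₀ m₀) := by
  refine commute_opOf (fun _ => rfl) (fun ⟨k, l⟩ => ?_) fun ⟨k, l⟩ => ?_
  · rw [jf_sub_mf, jf_sub_mf]
  · rw [jf_add_mf, jf_add_mf, sub_add_add_cancel]

theorem commute_Ttp_Ttm : Commute (Ttp j₀ m₀) (Ttm j₀ m₀) := by
  refine commute_opOf (fun _ => rfl) (fun ⟨k, l⟩ => ?_) fun ⟨k, l⟩ => ?_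
  · rw [jf_add_mf, jf_add_mf, add_add_sub_cancel]
  · rw [jf_sub_mf, jf_sub_mf]

theorem commute_Tp_Ttp : Commute (Tp j₀ m₀) (Ttp j₀ m₀) := by
  refine commute_opOf (fun x => by simp) (fun ⟨k, l⟩ => ?_) fun ⟨k, l⟩ => ?_
  · rw [jf_sub_mf, jf_sub_mf]
  · rw [jf_add_mf, jf_add_mf, sub_add_add_cancel]

theorem commute_Tm_Ttm : Commute (Tm j₀ m₀) (Ttm j₀ m₀) := by
  refine commute_opOf (fun x => by simp) (fun ⟨k, l⟩ => ?_) fun ⟨k, l⟩ => ?_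
  · rw [jf_add_mf, jf_add_mf, add_add_sub_cancel]
  · rw [jf_sub_mf, jf_sub_mf]

theorem isTwoModeHeisenberg_spinor :
    IsTwoModeHeisenberg (Tp j₀ m₀) (Ttm j₀ m₀) (Ttp j₀ m₀) (Tm j₀ m₀) where
  lie_fst := lie_Tp_Ttm j₀ m₀
  lie_snd := lie_Ttp_Tm j₀ m₀
  commute_annihilation := commute_Tp_Ttp j₀ m₀
  commute_creation := (commute_Tm_Ttm j₀ m₀).symm
  commute_fst_snd := commute_Tp_Tm j₀ m₀
  commute_snd_fst := commute_Ttp_Ttm j₀ m₀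

end SpinorOperators

section Generators

variable (j₀ m₀ : ℂ)

theorem J0_single_one (k l : ℤ) :
    J0 j₀ m₀ (Finsupp.single (k, l) 1) = mf m₀ (k, l) • Finsupp.single (k, l) 1 := by
  rw [J0, ← Module.End.mul_eq_comp, ← Module.End.mul_eq_comp, Tm_mul_Ttp, Tp_mul_Ttm,
    LinearMap.smul_apply, LinearMap.add_apply, opOf_single_one, opOf_single_one, id]
  module

theorem Jp_single_one (k l : ℤ) :
    Jp j₀ m₀ (Finsupp.single (k, l) 1) =
      (Complex.I * csqrt (jf j₀ k - mf m₀ (k, l)) * csqrt (jf j₀ k + mf m₀ (k, l) + 1)) •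
        Finsupp.single (k, l + 1) 1 := by
  rw [Jp, ← Module.End.mul_eq_comp, Tp, Ttp, opOf_mul_opOf, LinearMap.smul_apply, opOf_single_one]
  simp only [Function.comp_apply, jf_sub_mf, smul_smul, mul_assoc, add_sub_cancel_right]

theorem Jm_single_one (k l : ℤ) :
    Jm j₀ m₀ (Finsupp.single (k, l) 1) =
      (Complex.I * csqrt (jf j₀ k + mf m₀ (k, l)) * csqrt (jf j₀ k - mf m₀ (k, l) + 1)) •
        Finsupp.single (k, l - 1) 1 := by
  rw [Jm, ← Module.End.mul_eq_comp, Tm, Ttm, opOf_mul_opOf, LinearMap.smul_apply, opOf_single_one]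
  simp only [Function.comp_apply, jf_add_mf, smul_smul, add_sub_cancel_right, add_add_sub_cancel,
    neg_mul, mul_neg, neg_neg, mul_assoc]

theorem lie_J0_Jp : ⁅J0 j₀ m₀, Jp j₀ m₀⁆ = Jp j₀ m₀ :=
  (isTwoModeHeisenberg_spinor j₀ m₀).lie_neg_half_number_smul_annihilation_mul Complex.I

theorem lie_J0_Jm : ⁅J0 j₀ m₀, Jm j₀ m₀⁆ = -Jm j₀ m₀ :=
  (isTwoModeHeisenberg_spinor j₀ m₀).lie_neg_half_number_smul_creation_mul (-Complex.I)

theorem lie_Jp_Jm : ⁅Jp j₀ m₀, Jm j₀ m₀⁆ = (-2 : ℂ) • J0 j₀ m₀ :=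
  (isTwoModeHeisenberg_spinor j₀ m₀).lie_smul_annihilation_mul_smul_creation_mul
    (by rw [mul_neg, Complex.I_mul_I, neg_neg])

end Generators

/-- The Jordan–Schwinger construction for `𝔰𝔭𝔦𝔫(2,1)`: the spinor operators
`T₊, T₋, T̃₊, T̃₋` satisfy Heisenberg commutation relations, and the bilinears
`J₀, J₊, J₋` act as the `𝔰𝔭𝔦𝔫(2,1)` generators on the weight lattice
`{(j₀+k/2, m₀+k/2+l) : (k,l) ∈ ℤ²}`, for arbitrary `j₀, m₀ ∈ ℂ`. -/
theorem jordan_schwinger_spin21 (j₀ m₀ : ℂ) :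
    (Tp j₀ m₀ ∘ₗ Ttm j₀ m₀ - Ttm j₀ m₀ ∘ₗ Tp j₀ m₀ = LinearMap.id) ∧
    (Ttp j₀ m₀ ∘ₗ Tm j₀ m₀ - Tm j₀ m₀ ∘ₗ Ttp j₀ m₀ = LinearMap.id) ∧
    (Tp j₀ m₀ ∘ₗ Tm j₀ m₀ - Tm j₀ m₀ ∘ₗ Tp j₀ m₀ = 0) ∧
    (Ttp j₀ m₀ ∘ₗ Ttm j₀ m₀ - Ttm j₀ m₀ ∘ₗ Ttp j₀ m₀ = 0) ∧
    (Tp j₀ m₀ ∘ₗ Ttp j₀ m₀ - Ttp j₀ m₀ ∘ₗ Tp j₀ m₀ = 0) ∧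
    (Tm j₀ m₀ ∘ₗ Ttm j₀ m₀ - Ttm j₀ m₀ ∘ₗ Tm j₀ m₀ = 0) ∧
    (∀ k l : ℤ, J0 j₀ m₀ (Finsupp.single (k, l) 1) =
      mf m₀ (k, l) • Finsupp.single (k, l) 1) ∧
    (∀ k l : ℤ, Jp j₀ m₀ (Finsupp.single (k, l) 1) =
      (Complex.I * csqrt (jf j₀ k - mf m₀ (k, l)) * csqrt (jf j₀ k + mf m₀ (k, l) + 1)) •
        Finsupp.single (k, l + 1) 1) ∧
    (∀ k l : ℤ, Jm j₀ m₀ (Finsupp.single (k, l) 1) =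
      (Complex.I * csqrt (jf j₀ k + mf m₀ (k, l)) * csqrt (jf j₀ k - mf m₀ (k, l) + 1)) •
        Finsupp.single (k, l - 1) 1) ∧
    (J0 j₀ m₀ ∘ₗ Jp j₀ m₀ - Jp j₀ m₀ ∘ₗ J0 j₀ m₀ = Jp j₀ m₀) ∧
    (J0 j₀ m₀ ∘ₗ Jm j₀ m₀ - Jm j₀ m₀ ∘ₗ J0 j₀ m₀ = -Jm j₀ m₀) ∧
    (Jp j₀ m₀ ∘ₗ Jm j₀ m₀ - Jm j₀ m₀ ∘ₗ Jp j₀ m₀ = (-2 : ℂ) • J0 j₀ m₀) :=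
  ⟨lie_Tp_Ttm j₀ m₀, lie_Ttp_Tm j₀ m₀,
    sub_eq_zero_of_eq (commute_Tp_Tm j₀ m₀).eq, sub_eq_zero_of_eq (commute_Ttp_Ttm j₀ m₀).eq,
    sub_eq_zero_of_eq (commute_Tp_Ttp j₀ m₀).eq, sub_eq_zero_of_eq (commute_Tm_Ttm j₀ m₀).eq,
    J0_single_one j₀ m₀, Jp_single_one j₀ m₀, Jm_single_one j₀ m₀,
    lie_J0_Jp j₀ m₀, lie_J0_Jm j₀ m₀, lie_Jp_Jm j₀ m₀⟩

end
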